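/- arXiv:2511.05011 — 2 statements merged into one kernel-verified Lean document; each statement's English description precedes it below -/
import Mathlib

section
/- If ρ ∈ (0,1], λ > 0 and β ≥ ρ, then for all t ≥ 0 one has 0 ≤ E_{ρ,β}(-λ t^ρ) ≤ 1/Γ(β). -/
open Real Set

/-- The two-parameter Mittag-Leffler function `E_{ρ,β}(z) = ∑_{k=0}^∞ z^k / Γ(kρ + β)`. -/
noncomputable def mlE (ρ β z : ℝ) : ℝ := ∑' k : ℕ, z ^ k / Real.Gamma (k * ρ + β)

/-- Coefficients of `(1 - z)^(-s)`. -/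
noncomputable def mlQ (m : ℕ) (s : ℝ) : ℝ := (∏ j ∈ Finset.range m, (s + j)) / (m.factorial : ℝ)

lemma mlQ_succ (m : ℕ) (s : ℝ) : (m + 1) * mlQ (m + 1) s = (s + m) * mlQ m s := by
  unfold mlQ
  rw [Finset.prod_range_succ, Nat.factorial_succ]
  have : (m.factorial : ℝ) ≠ 0 := by exact_mod_cast Nat.factorial_ne_zero m
  have : (m : ℝ) + 1 ≠ 0 := by positivity
  push_cast
  field_simp

lemma mlQ_eq_choose (m : ℕ) (s : ℝ) : mlQ m s = (-1) ^ m * Ring.choose (-s) m := by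
  rw [Ring.choose_eq_smul, mlQ]
  have : ∏ j ∈ Finset.range m, (s + j) = (-1) ^ m * (descPochhammer ℤ m).smeval (-s) := by
    induction m with
    | zero => simp
    | succ m ih =>
      rw [Finset.prod_range_succ, ih, descPochhammer_succ_right, Polynomial.smeval_mul]
      simp [Polynomial.smeval_sub, Polynomial.smeval_natCast]
      ring
  rw [this, smul_eq_mul]
  ring

lemma mlQ_add (m : ℕ) (s t : ℝ) :
    mlQ m (s + t) = ∑ ij ∈ Finset.HasAntidiagonal.antidiagonal m, mlQ ij.1 s * mlQ ij.2 t := by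
  rw [mlQ_eq_choose, neg_add, Ring.add_choose_eq m (Commute.all _ _), Finset.mul_sum]
  refine Finset.sum_congr rfl fun ij hij => ?_
  rw [mlQ_eq_choose, mlQ_eq_choose, ← Finset.HasAntidiagonal.mem_antidiagonal.1 hij, pow_add]
  ring

lemma mlQ_zero (s : ℝ) : mlQ 0 s = 1 := by simp [mlQ]

lemma mlQ_nonneg (m : ℕ) {s : ℝ} (hs : 0 ≤ s) : 0 ≤ mlQ m s := by
  unfold mlQ
  positivity

lemma mlQ_succ_zero (m : ℕ) : mlQ (m + 1) 0 = 0 := by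
  simp [mlQ, Finset.prod_range_succ']

lemma mlQ_neg (m : ℕ) {ρ : ℝ} (h0 : 0 ≤ ρ) (h1 : ρ ≤ 1) : mlQ (m + 1) (-ρ) ≤ 0 := by
  unfold mlQ
  rw [Finset.prod_range_succ']
  apply div_nonpos_of_nonpos_of_nonneg _ (by positivity)
  apply mul_nonpos_of_nonneg_of_nonpos
  · apply Finset.prod_nonneg
    intro i _
    push_cast
    have : (0 : ℝ) ≤ i := by positivity
    linarith
  · simpa using h0

lemma summable_aux (ρ b y : ℝ) (hy : |y| < 1) (m : ℕ) : ∀ p : ℕ,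
    Summable fun k : ℕ => (k : ℝ) ^ p * y ^ k * ∏ j ∈ Finset.range m, (b + k * ρ + j) := by
  induction m with
  | zero =>
    intro p
    simpa using summable_pow_mul_geometric_of_norm_lt_one (R := ℝ) p (r := y) (by simpa using hy)
  | succ m ih =>
    intro p
    refine (((ih p).mul_left (b + m)).add ((ih (p + 1)).mul_left ρ)).congr fun k => ?_
    rw [Finset.prod_range_succ]
    ring

lemma summable_mlA (ρ b y : ℝ) (hy : |y| < 1) (m : ℕ) :
    Summable fun k : ℕ => y ^ k * mlQ m (b + k * ρ) := by
  refine ((summable_aux ρ b y hy m 0).div_const (m.factorial : ℝ)).congr fun k => ?_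
  simp [mlQ]
  ring

noncomputable def mlA (ρ y : ℝ) (m : ℕ) (b : ℝ) : ℝ := ∑' k : ℕ, (-y) ^ k * mlQ m (b + k * ρ)

lemma mlA_add (ρ y : ℝ) (hy : |y| < 1) (m : ℕ) (g b : ℝ) :
    mlA ρ y m (g + b) = ∑ ij ∈ Finset.HasAntidiagonal.antidiagonal m, mlQ ij.1 g * mlA ρ y ij.2 b := by
  unfold mlA
  have hy' : |-y| < 1 := by simpa using hy
  simp_rw [← tsum_mul_left]
  rw [← Summable.tsum_finsetSum]
  · refine tsum_congr fun k => ?_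
    rw [add_assoc, mlQ_add, Finset.mul_sum]
    exact Finset.sum_congr rfl fun ij _ => by ring
  · intro ij _
    exact (summable_mlA ρ b (-y) hy' ij.2).mul_left _

lemma mlA_rec (ρ y : ℝ) (hy : |y| < 1) (m : ℕ) (b : ℝ) :
    mlA ρ y m b = mlQ m b - y * mlA ρ y m (b + ρ) := by
  unfold mlA
  have hy' : |-y| < 1 := by simpa using hy
  rw [(summable_mlA ρ b (-y) hy' m).tsum_eq_zero_add, ← tsum_mul_left, sub_eq_add_neg, ← tsum_neg]
  congr 1
  · simp
  · refine tsum_congr fun k => ?_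
    rw [show b + ((k + 1 : ℕ) : ℝ) * ρ = b + ρ + k * ρ by push_cast; ring]
    ring

lemma mlA_rho_nonneg (ρ y : ℝ) (h0 : 0 ≤ ρ) (h1 : ρ ≤ 1) (hy0 : 0 ≤ y) (hy1 : y < 1) (m : ℕ) :
    0 ≤ mlA ρ y m ρ := by
  have hy : |y| < 1 := by rwa [abs_of_nonneg hy0]
  induction m using Nat.strong_induction_on with
  | _ m ih =>
    have e1 := mlA_rec ρ y hy m 0
    have e2 := mlA_add ρ y hy m (-ρ) ρ
    rw [zero_add] at e1
    rw [neg_add_cancel, e1] at e2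
    suffices 0 ≤ (1 + y) * mlA ρ y m ρ from nonneg_of_mul_nonneg_right this (by linarith)
    cases m with
    | zero =>
      simp [mlQ_zero] at e2
      linarith
    | succ m =>
      rw [Finset.Nat.antidiagonal_succ, Finset.sum_cons, mlQ_succ_zero, mlQ_zero,
        Finset.sum_map] at e2
      have : ∑ ij ∈ Finset.HasAntidiagonal.antidiagonal m, mlQ (ij.1 + 1) (-ρ) * mlA ρ y ij.2 ρ ≤ 0 := by
        refine Finset.sum_nonpos fun ij hij => ?_
        have := Finset.HasAntidiagonal.mem_antidiagonal.1 hij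
        exact mul_nonpos_of_nonpos_of_nonneg (mlQ_neg _ h0 h1) (ih _ (by omega))
      simp at e2
      linarith

lemma mlA_nonneg (ρ y b : ℝ) (h0 : 0 ≤ ρ) (h1 : ρ ≤ 1) (hb : ρ ≤ b) (hy0 : 0 ≤ y) (hy1 : y < 1)
    (m : ℕ) : 0 ≤ mlA ρ y m b := by
  have hy : |y| < 1 := by rwa [abs_of_nonneg hy0]
  have e := mlA_add ρ y hy m (b - ρ) ρ
  rw [sub_add_cancel] at e
  rw [e]
  exact Finset.sum_nonneg fun ij _ =>
    mul_nonneg (mlQ_nonneg _ (by linarith)) (mlA_rho_nonneg ρ y h0 h1 hy0 hy1 _)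

lemma inv_GammaSeq (s : ℝ) (n : ℕ) :
    (GammaSeq s n)⁻¹ = (n + 1) * mlQ (n + 1) s * ((n : ℝ) ^ s)⁻¹ := by
  unfold GammaSeq mlQ
  rw [Nat.factorial_succ]
  have : (n.factorial : ℝ) ≠ 0 := by exact_mod_cast Nat.factorial_ne_zero n
  have : (n : ℝ) + 1 ≠ 0 := by positivity
  push_cast
  rw [inv_div]
  field_simp

lemma inv_GammaSeq_nonneg {s : ℝ} (hs : 0 ≤ s) (n : ℕ) : 0 ≤ (GammaSeq s n)⁻¹ := by
  unfold GammaSeq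
  positivity

lemma inv_GammaSeq_succ_le {s : ℝ} (hs : 0 ≤ s) {n : ℕ} (hn : 1 ≤ n) :
    (GammaSeq s (n + 1))⁻¹ ≤ (GammaSeq s n)⁻¹ := by
  have hn0 : (0 : ℝ) < n := by exact_mod_cast hn
  rw [inv_GammaSeq, inv_GammaSeq]
  have e := mlQ_succ (n + 1) s
  push_cast at e ⊢
  rw [e]
  have hq := mlQ_nonneg (n + 1) hs
  have key : 1 + s / (n + 1) ≤ ((n + 1) / n : ℝ) ^ s := by
    rw [Real.rpow_def_of_pos (by positivity)]
    have h1 := Real.one_sub_inv_le_log_of_pos (x := ((n + 1) / n : ℝ)) (by positivity)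
    have h2 : 1 - ((n + 1) / n : ℝ)⁻¹ = 1 / (n + 1) := by field_simp; ring
    rw [h2] at h1
    calc 1 + s / (n + 1) = 1 / (n + 1) * s + 1 := by ring
      _ ≤ Real.log ((n + 1) / n : ℝ) * s + 1 := by gcongr
      _ ≤ _ := Real.add_one_le_exp _
  rw [Real.div_rpow (by positivity) (by positivity)] at key
  have p1 : (0 : ℝ) < (n : ℝ) ^ s := by positivity
  have p2 : (0 : ℝ) < ((n : ℝ) + 1) ^ s := by positivity
  rw [le_div_iff₀ p1] at key
  have k2 : (s + (n + 1)) * (((n : ℝ) + 1) ^ s)⁻¹ ≤ (n + 1) * ((n : ℝ) ^ s)⁻¹ := by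
    rw [← div_eq_mul_inv, ← div_eq_mul_inv, div_le_div_iff₀ p2 p1]
    calc (s + (n + 1)) * (n : ℝ) ^ s = (n + 1) * ((1 + s / (n + 1)) * (n : ℝ) ^ s) := by
          field_simp; ring
      _ ≤ _ := by gcongr
  calc _ = ((s + (n + 1)) * (((n : ℝ) + 1) ^ s)⁻¹) * mlQ (n + 1) s := by ring
    _ ≤ ((n + 1) * ((n : ℝ) ^ s)⁻¹) * mlQ (n + 1) s := by gcongr
    _ = _ := by ring

lemma inv_GammaSeq_le {s : ℝ} (hs : 0 ≤ s) {N n : ℕ} (hN : 1 ≤ N) (hn : N ≤ n) :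
    (GammaSeq s n)⁻¹ ≤ (GammaSeq s N)⁻¹ := by
  induction n, hn using Nat.le_induction with
  | base => exact le_rfl
  | succ n hn ih => exact (inv_GammaSeq_succ_le hs (hN.trans hn)).trans ih

lemma term_eq (ρ b x : ℝ) {n : ℕ} (hn : 1 ≤ n) (k : ℕ) :
    x ^ k * (GammaSeq (k * ρ + b) n)⁻¹ =
      ((n + 1) * ((n : ℝ) ^ b)⁻¹) * ((x / (n : ℝ) ^ ρ) ^ k * mlQ (n + 1) (b + k * ρ)) := by
  have hn0 : (0 : ℝ) < n := by exact_mod_cast hn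
  rw [inv_GammaSeq, Real.rpow_add hn0, mul_comm (k : ℝ) ρ, Real.rpow_mul hn0.le,
    Real.rpow_natCast, add_comm b, div_pow]
  have p : (0 : ℝ) < (n : ℝ) ^ ρ := by positivity
  field_simp

lemma exists_N (ρ x : ℝ) (h0 : 0 < ρ) : ∃ N : ℕ, 1 ≤ N ∧ ∀ n : ℕ, N ≤ n → x < (n : ℝ) ^ ρ := by
  have h := (tendsto_rpow_atTop h0).comp (tendsto_natCast_atTop_atTop (R := ℝ))
  obtain ⟨N, hN⟩ := Filter.eventually_atTop.1 (h.eventually_gt_atTop x)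
  exact ⟨max N 1, le_max_right _ _, fun n hn => hN n ((le_max_left _ _).trans hn)⟩

lemma bound_summable (ρ b x : ℝ) (hx : 0 ≤ x) {N : ℕ} (hN : 1 ≤ N) (h : x < (N : ℝ) ^ ρ) :
    Summable fun k : ℕ => x ^ k * (GammaSeq (k * ρ + b) N)⁻¹ := by
  have hn0 : (0 : ℝ) < N := by exact_mod_cast hN
  have p : (0 : ℝ) < (N : ℝ) ^ ρ := by positivity
  simp_rw [term_eq ρ b x hN]
  apply Summable.mul_left
  apply summable_mlA
  rw [abs_of_nonneg (by positivity)]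
  exact (div_lt_one p).2 h

lemma tendsto_inv_GammaSeq {s : ℝ} (hs : 0 < s) :
    Filter.Tendsto (fun n => (GammaSeq s n)⁻¹) Filter.atTop (nhds (Gamma s)⁻¹) :=
  (GammaSeq_tendsto_Gamma s).inv₀ (Gamma_pos_of_pos hs).ne'

lemma ml_summable (ρ b x : ℝ) (h0 : 0 < ρ) (hb : 0 < b) (hx : 0 ≤ x) :
    Summable fun k : ℕ => (-x) ^ k / Gamma (k * ρ + b) := by
  obtain ⟨N, hN, h⟩ := exists_N ρ x h0
  refine Summable.of_norm_bounded (bound_summable ρ b x hx hN (h N le_rfl)) fun k => ?_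
  have hs : 0 < k * ρ + b := by positivity
  rw [norm_div, norm_pow, norm_neg, Real.norm_of_nonneg hx,
    Real.norm_of_nonneg (Gamma_pos_of_pos hs).le, div_eq_mul_inv]
  refine mul_le_mul_of_nonneg_left ?_ (by positivity)
  refine le_of_tendsto (tendsto_inv_GammaSeq hs) ?_
  filter_upwards [Filter.eventually_ge_atTop N] with n hn
  exact inv_GammaSeq_le hs.le hN hn

lemma mlE_nonneg (ρ b x : ℝ) (h0 : 0 < ρ) (h1 : ρ ≤ 1) (hb : ρ ≤ b) (hx : 0 ≤ x) :
    0 ≤ mlE ρ b (-x) := by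
  obtain ⟨N, hN, h⟩ := exists_N ρ x h0
  have hb0 : 0 < b := by linarith
  have T : Filter.Tendsto (fun n : ℕ => ∑' k : ℕ, (-x) ^ k * (GammaSeq (k * ρ + b) n)⁻¹)
      Filter.atTop (nhds (∑' k : ℕ, (-x) ^ k * (Gamma (k * ρ + b))⁻¹)) := by
    refine tendsto_tsum_of_dominated_convergence (bound_summable ρ b x hx hN (h N le_rfl)) ?_ ?_
    · intro k
      exact (tendsto_inv_GammaSeq (by positivity)).const_mul _
    · filter_upwards [Filter.eventually_ge_atTop N] with n hn k
      have hs : 0 < k * ρ + b := by positivity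
      rw [norm_mul, norm_pow, norm_neg, Real.norm_of_nonneg hx,
        Real.norm_of_nonneg (inv_GammaSeq_nonneg hs.le n)]
      refine mul_le_mul_of_nonneg_left ?_ (by positivity)
      exact inv_GammaSeq_le hs.le hN hn
  unfold mlE
  simp_rw [div_eq_mul_inv]
  refine ge_of_tendsto T ?_
  filter_upwards [Filter.eventually_ge_atTop N] with n hn
  have hn1 := hN.trans hn
  have hn0 : (0 : ℝ) < n := by exact_mod_cast hn1
  have p : (0 : ℝ) < (n : ℝ) ^ ρ := by positivity
  simp_rw [term_eq ρ b (-x) hn1]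
  rw [tsum_mul_left]
  apply mul_nonneg (by positivity)
  have := mlA_nonneg ρ (x / (n : ℝ) ^ ρ) b h0.le h1 hb (by positivity)
    ((div_lt_one p).2 (h n hn)) (n + 1)
  simpa [mlA, neg_div] using this

/-- If `ρ ∈ (0,1]`, `λ > 0` and `β ≥ ρ`, then for all `t ≥ 0`,
`0 ≤ E_{ρ,β}(-λ t^ρ) ≤ 1/Γ(β)`. -/
theorem mittagLeffler_nonneg_le (ρ lam β : ℝ) (hρ₀ : 0 < ρ) (hρ₁ : ρ ≤ 1)
    (hlam : 0 < lam) (hβ : ρ ≤ β) (t : ℝ) (ht : 0 ≤ t) :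
    0 ≤ mlE ρ β (-lam * t ^ ρ) ∧ mlE ρ β (-lam * t ^ ρ) ≤ 1 / Real.Gamma β := by
  have hx : 0 ≤ lam * t ^ ρ := by positivity
  rw [neg_mul]
  refine ⟨mlE_nonneg ρ β _ hρ₀ hρ₁ hβ hx, ?_⟩
  have h2 := mlE_nonneg ρ (β + ρ) _ hρ₀ hρ₁ (by linarith) hx
  generalize lam * t ^ ρ = x at *
  have e : mlE ρ β (-x) = 1 / Real.Gamma β - x * mlE ρ (β + ρ) (-x) := by
    unfold mlE
    rw [(ml_summable ρ β x hρ₀ (by linarith) hx).tsum_eq_zero_add, ← tsum_mul_left,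
      sub_eq_add_neg, ← tsum_neg]
    congr 1
    · simp
    · refine tsum_congr fun k => ?_
      rw [show ((k + 1 : ℕ) : ℝ) * ρ + β = k * ρ + (β + ρ) by push_cast; ring]
      ring
  rw [e]
  have := mul_nonneg hx h2
  linarith
end

section
/- Let 0 < ρ < 1, T > 0, l > 0, and fix k ≥ 1 with λ_k = πk/l. Assume σ is continuous on [0,T] with 0 < m_σ ≤ σ(t) ≤ M_σ, q is continuous on [0,T] with q(t) ≥ n_q > -m_σ π²/l², f_k is continuous on [0,T], and φ_k ∈ ℝ. Suppose u_k is continuous on [0,T], differentiable on (0,T), its Caputo derivative D^ρ u_k is continuous on [0,T], and u_k satisfies D^ρ u_k(t) + λ_k² σ(t) u_k(t) + q(t) u_k(t) = f_k(t) on (0,T] with u_k(0) = φ_k. Then: (a) if f_k(t) ≤ 0 on [0,T] and φ_k ≤ 0, then u_k(t) ≤ 0 on [0,T]; (b) if f_k(t) ≥ 0 on [0,T] and φ_k ≥ 0, then u_k(t) ≥ 0 on [0,T]. -/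
open Real Set MeasureTheory

/-- The Caputo fractional derivative of order `ρ`:
`D^ρ h(t) = (1/Γ(1-ρ)) ∫₀^t h'(η) (t-η)^{-ρ} dη`. -/
noncomputable def caputo (ρ : ℝ) (h : ℝ → ℝ) (t : ℝ) : ℝ :=
  (1 / Real.Gamma (1 - ρ)) * ∫ η in (0:ℝ)..t, deriv h η * (t - η) ^ (-ρ)

lemma caputo_nonneg_at_max (ρ t : ℝ) (hρ₀ : 0 < ρ) (hρ₁ : ρ < 1) (ht : 0 < t) (u : ℝ → ℝ)
    (hu : ContinuousOn u (Set.Icc 0 t)) (hud : DifferentiableOn ℝ u (Set.Ioo 0 t))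
    (hmax : ∀ s ∈ Set.Icc 0 t, u s ≤ u t) : 0 ≤ caputo ρ u t := by
  unfold caputo
  have hG : 0 < Real.Gamma (1 - ρ) := Real.Gamma_pos_of_pos (by linarith)
  refine mul_nonneg (by positivity) ?_
  by_cases hint : IntervalIntegrable (fun η => deriv u η * (t - η) ^ (-ρ)) volume 0 t
  swap
  · rw [intervalIntegral.integral_undef hint]
  have hda : ∀ x ∈ Set.Ioo 0 t, HasDerivAt u (deriv u x) x := fun x hx =>
    (hud.differentiableAt (Ioo_mem_nhds hx.1 hx.2)).hasDerivAt
  have hsub : ∀ a ∈ Set.Icc 0 t, ∀ b ∈ Set.Icc 0 t,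
      IntervalIntegrable (fun η => deriv u η * (t - η) ^ (-ρ)) volume a b := by
    intro a ha b hb
    refine hint.mono_set ?_
    rw [Set.uIcc_of_le ht.le]
    exact Set.uIcc_subset_Icc ha hb
  have key : ∀ s ∈ Set.Ioo 0 t,
      -(2 * ∫ η in s..t, |deriv u η * (t - η) ^ (-ρ)|) ≤
        ∫ η in (0:ℝ)..t, deriv u η * (t - η) ^ (-ρ) := by
    intro s hs
    have h0m : (0:ℝ) ∈ Set.Icc 0 t := ⟨le_rfl, ht.le⟩
    have htm : t ∈ Set.Icc 0 t := ⟨ht.le, le_rfl⟩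
    have hsm : s ∈ Set.Icc 0 t := ⟨hs.1.le, hs.2.le⟩
    have hws : 0 < (t - s) ^ (-ρ) := Real.rpow_pos_of_pos (by linarith [hs.2]) _
    have hw0 : 0 < (t - 0) ^ (-ρ) := Real.rpow_pos_of_pos (by linarith) _
    -- first part
    have h1 : (u s - u t) * (t - s) ^ (-ρ) - (u 0 - u t) * (t - 0) ^ (-ρ) ≤
        ∫ η in (0:ℝ)..s, deriv u η * (t - η) ^ (-ρ) := by
      refine intervalIntegral.sub_le_integral_of_hasDeriv_right_of_le
        (g := fun x => (u x - u t) * (t - x) ^ (-ρ))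
        (g' := fun x => deriv u x * (t - x) ^ (-ρ) +
          (u x - u t) * ((-1) * (-ρ) * (t - x) ^ (-ρ - 1))) hs.1.le ?_ ?_ ?_ ?_
      · refine ContinuousOn.mul ?_ ?_
        · exact (hu.mono (Set.Icc_subset_Icc le_rfl hs.2.le)).sub continuousOn_const
        · refine ContinuousOn.rpow_const (by fun_prop) ?_
          intro x hx
          left
          have := hx.2
          have := hs.2
          intro h
          linarith
      · intro x hx
        have hx2 : x < t := hx.2.trans hs.2
        have e1 := (hda x ⟨hx.1, hx2⟩).sub_const (u t)
        have e2 : HasDerivAt (fun x => (t - x) ^ (-ρ)) ((-1) * (-ρ) * (t - x) ^ (-ρ - 1)) x :=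
          ((hasDerivAt_id x).const_sub t).rpow_const (Or.inl (by simp; linarith))
        exact (e1.mul e2).hasDerivWithinAt
      · exact (intervalIntegrable_iff_integrableOn_Icc_of_le hs.1.le).1 (hsub 0 h0m s hsm)
      · intro x hx
        have hx2 : x < t := hx.2.trans hs.2
        have e1 := hmax x ⟨hx.1.le, hx2.le⟩
        have e2 : 0 < (t - x) ^ (-ρ - 1) := Real.rpow_pos_of_pos (by linarith) _
        have : 0 ≤ (u t - u x) * (ρ * (t - x) ^ (-ρ - 1)) :=
          mul_nonneg (by linarith) (by positivity)
        nlinarith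
    have h2 : u t * (t - s) ^ (-ρ) - u s * (t - s) ^ (-ρ) ≤
        ∫ η in s..t, |deriv u η * (t - η) ^ (-ρ)| := by
      refine intervalIntegral.sub_le_integral_of_hasDeriv_right_of_le
        (g := fun x => u x * (t - s) ^ (-ρ))
        (g' := fun x => deriv u x * (t - s) ^ (-ρ)) hs.2.le ?_ ?_ ?_ ?_
      · exact (hu.mono (Set.Icc_subset_Icc hs.1.le le_rfl)).mul continuousOn_const
      · intro x hx
        exact ((hda x ⟨hs.1.trans hx.1, hx.2⟩).mul_const _).hasDerivWithinAt
      · exact (intervalIntegrable_iff_integrableOn_Icc_of_le hs.2.le).1 (hsub s hsm t htm).abs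
      · intro x hx
        have hx0 : 0 < t - x := by linarith [hx.2]
        have e1 : (t - s) ^ (-ρ) ≤ (t - x) ^ (-ρ) :=
          Real.rpow_le_rpow_of_nonpos hx0 (by linarith [hx.1]) (by linarith)
        have e2 : 0 < (t - x) ^ (-ρ) := Real.rpow_pos_of_pos hx0 _
        rw [abs_mul, abs_of_pos e2]
        exact mul_le_mul (le_abs_self _) e1 hws.le (abs_nonneg _)
    have h3 : |∫ η in s..t, deriv u η * (t - η) ^ (-ρ)| ≤
        ∫ η in s..t, |deriv u η * (t - η) ^ (-ρ)| :=
      intervalIntegral.abs_integral_le_integral_abs hs.2.le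
    have h4 := intervalIntegral.integral_add_adjacent_intervals (hsub 0 h0m s hsm)
      (hsub s hsm t htm)
    have h5 : 0 ≤ (u t - u 0) * (t - 0) ^ (-ρ) :=
      mul_nonneg (by linarith [hmax 0 h0m]) hw0.le
    have h6 := (abs_le.1 h3).1
    nlinarith
  -- limit
  have hlim : Filter.Tendsto (fun s => -(2 * ∫ η in s..t, |deriv u η * (t - η) ^ (-ρ)|))
      (nhdsWithin t (Set.Ioo 0 t)) (nhds 0) := by
    have hc : ContinuousOn (fun s => ∫ η in t..s, |deriv u η * (t - η) ^ (-ρ)|)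
        (Set.uIcc 0 t) := by
      refine intervalIntegral.continuousOn_primitive_interval' hint.abs ?_
      exact Set.right_mem_uIcc
    have h1 := (hc t Set.right_mem_uIcc).mono_left (nhdsWithin_mono t
      (s := Set.Ioo 0 t) (by rw [Set.uIcc_of_le ht.le]; exact Set.Ioo_subset_Icc_self))
    simp only [intervalIntegral.integral_same] at h1
    have h2 := h1.const_mul 2
    simp only [mul_zero] at h2
    refine h2.congr fun s => ?_
    rw [intervalIntegral.integral_symm]
    ring
  haveI : (nhdsWithin t (Set.Ioo 0 t)).NeBot := by
    rw [nhdsWithin_Ioo_eq_nhdsLT ht]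
    infer_instance
  exact le_of_tendsto hlim (Filter.eventually_of_mem self_mem_nhdsWithin key)

lemma sign_aux (ρ T : ℝ) (hρ₀ : 0 < ρ) (hρ₁ : ρ < 1) (hT : 0 < T) (c u : ℝ → ℝ)
    (hc : ∀ t ∈ Set.Icc 0 T, 0 < c t)
    (hu : ContinuousOn u (Set.Icc 0 T)) (hud : DifferentiableOn ℝ u (Set.Ioo 0 T))
    (heq : ∀ t ∈ Set.Ioc 0 T, caputo ρ u t + c t * u t ≤ 0) (h0 : u 0 ≤ 0) :
    ∀ t ∈ Set.Icc 0 T, u t ≤ 0 := by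
  obtain ⟨m, hm, hmax⟩ := isCompact_Icc.exists_isMaxOn (Set.nonempty_Icc.2 hT.le) hu
  intro t ht
  by_contra! hpos
  have hum : 0 < u m := hpos.trans_le (hmax ht)
  have hm0 : 0 < m := by
    rcases hm.1.eq_or_lt with h | h
    · rw [← h] at hum
      linarith
    · exact h
  have h1 := caputo_nonneg_at_max ρ m hρ₀ hρ₁ hm0 u
    (hu.mono (Set.Icc_subset_Icc le_rfl hm.2)) (hud.mono (Set.Ioo_subset_Ioo le_rfl hm.2))
    (fun s hs => hmax ⟨hs.1, hs.2.trans hm.2⟩)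
  have h2 := heq m ⟨hm0, hm.2⟩
  have h3 := mul_pos (hc m hm) hum
  linarith

lemma caputo_neg_fun (ρ : ℝ) (u : ℝ → ℝ) (t : ℝ) :
    caputo ρ (fun x => -u x) t = -caputo ρ u t := by
  unfold caputo
  simp [deriv.fun_neg]

/-- Sign preservation for the solution `u_k` of the Cauchy problem
`D^ρ u_k + λ_k² σ(t) u_k + q(t) u_k = f_k(t)`, `u_k(0) = φ_k`:
(a) if `f_k ≤ 0` on `[0,T]` and `φ_k ≤ 0`, then `u_k ≤ 0` on `[0,T]`;
(b) if `f_k ≥ 0` on `[0,T]` and `φ_k ≥ 0`, then `u_k ≥ 0` on `[0,T]`. -/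
theorem solution_sign_preservation (ρ T l : ℝ) (hρ₀ : 0 < ρ) (hρ₁ : ρ < 1)
    (hT : 0 < T) (hl : 0 < l) (k : ℕ) (hk : 1 ≤ k) (lam : ℝ) (hlamdef : lam = π * k / l)
    (σ q fk : ℝ → ℝ) (φk mσ Mσ nq : ℝ)
    (hσc : ContinuousOn σ (Set.Icc 0 T)) (hmσ : 0 < mσ)
    (hσb : ∀ t ∈ Set.Icc 0 T, mσ ≤ σ t ∧ σ t ≤ Mσ)
    (hqc : ContinuousOn q (Set.Icc 0 T))
    (hnq : -(mσ * π ^ 2 / l ^ 2) < nq)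
    (hqb : ∀ t ∈ Set.Icc 0 T, nq ≤ q t)
    (hfk : ContinuousOn fk (Set.Icc 0 T))
    (u : ℝ → ℝ) (hu : ContinuousOn u (Set.Icc 0 T))
    (hud : DifferentiableOn ℝ u (Set.Ioo 0 T))
    (hcap : ContinuousOn (caputo ρ u) (Set.Icc 0 T))
    (heq : ∀ t ∈ Set.Ioc 0 T,
      caputo ρ u t + lam ^ 2 * σ t * u t + q t * u t = fk t)
    (h0 : u 0 = φk) :
    ((∀ t ∈ Set.Icc 0 T, fk t ≤ 0) → φk ≤ 0 → ∀ t ∈ Set.Icc 0 T, u t ≤ 0) ∧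
    ((∀ t ∈ Set.Icc 0 T, 0 ≤ fk t) → 0 ≤ φk → ∀ t ∈ Set.Icc 0 T, 0 ≤ u t) := by
  have hc : ∀ t ∈ Set.Icc 0 T, 0 < lam ^ 2 * σ t + q t := by
    intro t ht
    have h1 := (hσb t ht).1
    have h2 := hqb t ht
    have hk' : (1:ℝ) ≤ k := by exact_mod_cast hk
    have h3 : π ^ 2 / l ^ 2 ≤ lam ^ 2 := by
      rw [hlamdef, div_pow]
      gcongr
      exact le_mul_of_one_le_right Real.pi_pos.le hk'
    have h4 : π ^ 2 / l ^ 2 * mσ ≤ lam ^ 2 * σ t :=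
      mul_le_mul h3 h1 hmσ.le (by positivity)
    have h5 : π ^ 2 / l ^ 2 * mσ = mσ * π ^ 2 / l ^ 2 := by ring
    linarith
  constructor
  · intro hf hφ
    refine sign_aux ρ T hρ₀ hρ₁ hT _ u hc hu hud ?_ (by linarith)
    intro t ht
    have h1 := heq t ht
    have h2 := hf t ⟨ht.1.le, ht.2⟩
    linarith
  · intro hf hφ t ht
    have := sign_aux ρ T hρ₀ hρ₁ hT _ (fun x => -u x) hc hu.neg hud.neg ?_ (by linarith) t ht
    · linarith
    intro t ht
    have h1 := heq t ht
    have h2 := hf t ⟨ht.1.le, ht.2⟩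
    rw [caputo_neg_fun]
    linarith
end
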